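/- arXiv:2505.17277 — 7 statements merged into one kernel-verified Lean document; each statement's English description precedes it below -/
import Mathlib

section
/- For any d ≥ 2 and any binary row-stochastic matrix φ ∈ Φ_b, the special prior π satisfies log(1/π(φ)) ≤ 2 + 2 c_φ · log d, where c_φ = min{d − d^self_φ, d − d^unif_φ + 1}. -/
open Finset

/-- The binary row-stochastic matrix associated with a map `f : [d] → [d]`. -/
def toMat (d : ℕ) (f : Fin d → Fin d) : Matrix (Fin d) (Fin d) ℝ :=
  fun i j => if f i = j then 1 else 0

/-- The set `Φ_b` of binary row-stochastic `d × d` matrices. -/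
noncomputable def PhiB (d : ℕ) : Finset (Matrix (Fin d) (Fin d) ℝ) := by
  classical exact Finset.image (toMat d) Finset.univ

/-- A matrix is row-stochastic if every row lies in the simplex. -/
def RowStochastic {d : ℕ} (φ : Matrix (Fin d) (Fin d) ℝ) : Prop :=
  ∀ i, (∀ j, 0 ≤ φ i j) ∧ ∑ j, φ i j = 1

/-- A vector lies in the probability simplex `Δ(d)`. -/
def InSimplex (d : ℕ) (p : Fin d → ℝ) : Prop :=
  (∀ i, 0 ≤ p i) ∧ ∑ i, p i = 1

/-- The `ψ`-induced weight of `φ`: `π_ψ(φ) = ∏ i ⟨ψ_{i:}, φ_{i:}⟩`. -/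
noncomputable def piInd {d : ℕ} (ψ φ : Matrix (Fin d) (Fin d) ℝ) : ℝ :=
  ∏ i, ∑ j, ψ i j * φ i j

/-- `ψ^k = ((d-2)/(d-1))·1 e_k^T + (1/(d(d-1)))·1 1^T`. -/
noncomputable def psiK (d : ℕ) (k : Fin d) : Matrix (Fin d) (Fin d) ℝ :=
  fun _ j => ((d : ℝ) - 2) / ((d : ℝ) - 1) * (if j = k then 1 else 0) + 1 / ((d : ℝ) * ((d : ℝ) - 1))

/-- `ψ^{d+1} = ((d-2)/(d-1))·I + (1/(d(d-1)))·1 1^T`. -/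
noncomputable def psiSelf (d : ℕ) : Matrix (Fin d) (Fin d) ℝ :=
  fun i j => ((d : ℝ) - 2) / ((d : ℝ) - 1) * (if i = j then 1 else 0) + 1 / ((d : ℝ) * ((d : ℝ) - 1))

/-- The special prior `π = (1/(2d)) Σ_k π_{ψ^k} + (1/2) π_{ψ^{d+1}}`. -/
noncomputable def priorPi (d : ℕ) (φ : Matrix (Fin d) (Fin d) ℝ) : ℝ :=
  1 / (2 * d) * ∑ k : Fin d, piInd (psiK d k) φ + 1 / 2 * piInd (psiSelf d) φ

/-- `d^self_φ`: the number of indices `i` whose row equals `e_i^T`. -/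
noncomputable def dSelf {d : ℕ} (φ : Matrix (Fin d) (Fin d) ℝ) : ℕ :=
  Nat.card {i : Fin d // φ i = fun j => if j = i then (1 : ℝ) else 0}

/-- `d^unif_φ`: the maximum multiplicity in the multiset of rows of `φ`. -/
noncomputable def dUnif {d : ℕ} (φ : Matrix (Fin d) (Fin d) ℝ) : ℕ :=
  Finset.univ.sup fun i : Fin d => Nat.card {j : Fin d // φ j = φ i}

/-- Complexity measure for binary row-stochastic matrices. -/
noncomputable def cB {d : ℕ} (φ : Matrix (Fin d) (Fin d) ℝ) : ℕ :=
  min (d - dSelf φ) (d - dUnif φ + 1)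

/-- `Q_φ`: distributions over `Φ_b` (indexed by maps `f : [d] → [d]`) averaging to `φ`. -/
def QSet (d : ℕ) (φ : Matrix (Fin d) (Fin d) ℝ) : Set ((Fin d → Fin d) → ℝ) :=
  {q | (∀ f, 0 ≤ q f) ∧ (∑ f, q f = 1) ∧ ∀ i j, ∑ f, q f * toMat d f i j = φ i j}

/-- Extended complexity measure `c_φ = inf_{q ∈ Q_φ} E_{φ'∼q}[c_{φ'}]`. -/
noncomputable def cGen (d : ℕ) (φ : Matrix (Fin d) (Fin d) ℝ) : ℝ :=
  sInf ((fun q => ∑ f : Fin d → Fin d, q f * (cB (toMat d f) : ℝ)) '' QSet d φ)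

/-- Matrix inner product `⟨φ, p ℓ^T⟩`. -/
noncomputable def lossInner {d : ℕ} (φ : Matrix (Fin d) (Fin d) ℝ) (p ℓ : Fin d → ℝ) : ℝ :=
  ∑ i, ∑ j, φ i j * (p i * ℓ j)

/-- The mean matrix `E_{f∼q}[φ_f]` of a weight vector over binary matrices. -/
noncomputable def mixMat (d : ℕ) (q : (Fin d → Fin d) → ℝ) : Matrix (Fin d) (Fin d) ℝ :=
  fun i j => ∑ f, q f * toMat d f i j

/-- KL divergence of `q` (a distribution over `Φ_b`, indexed by maps) from the prior `π`. -/
noncomputable def klPrior (d : ℕ) (q : (Fin d → Fin d) → ℝ) : ℝ :=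
  ∑ f, q f * Real.log (q f / priorPi d (toMat d f))

/-- The kernel `K(B,A) = Σ_{φ∈Φ_b} π(φ) Π_{i,j : φ_{ij}=1} B_{ij} A_{ij}`. -/
noncomputable def kernelK (d : ℕ) (B A : Matrix (Fin d) (Fin d) ℝ) : ℝ := by
  classical exact
    ∑ φ ∈ PhiB d, priorPi d φ * ∏ i, ∏ j, if φ i j = 1 then B i j * A i j else 1

lemma aux_exp : (27:ℝ)/4 ≤ Real.exp 2 := by
  have h := Real.exp_one_gt_d9
  have : Real.exp 2 = Real.exp 1 * Real.exp 1 := by rw [← Real.exp_add]; norm_num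
  rw [this]; nlinarith

lemma aux_pow (d : ℕ) (hd : 3 ≤ d) : 2 * Real.exp (-2) ≤ (1 - 1 / (d:ℝ)) ^ d := by
  have he := aux_exp
  have he' : Real.exp (-2) ≤ 4 / 27 := by
    rw [Real.exp_neg, inv_le_comm₀ (Real.exp_pos _) (by norm_num)]; linarith
  by_cases h5 : d < 5
  · interval_cases d
    · norm_num; linarith
    · norm_num; linarith
  · push Not at h5
    have h5' : (5:ℝ) ≤ d := by exact_mod_cast h5
    have hpos : 0 < 1 - 1 / (d:ℝ) := by
      rw [sub_pos, div_lt_one (by linarith)]; linarith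
    have hlog : -(1 / ((d:ℝ) - 1)) ≤ Real.log (1 - 1 / (d:ℝ)) := by
      have := Real.one_sub_inv_le_log_of_pos hpos
      have e : 1 - (1 - 1 / (d:ℝ))⁻¹ = -(1 / ((d:ℝ) - 1)) := by
        have h1 : (d:ℝ) - 1 ≠ 0 := by linarith
        have h2 : (d:ℝ) ≠ 0 := by linarith
        have : 1 - 1 / (d:ℝ) = (d - 1) / d := by field_simp
        rw [this]; field_simp; ring
      linarith
    rw [← Real.exp_log (show (0:ℝ) < 2 by norm_num), ← Real.exp_add,
      ← Real.exp_log (pow_pos hpos d), Real.exp_le_exp, Real.log_pow]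
    have h2 := Real.log_two_lt_d9
    have h3 : (d:ℝ) * (1 / ((d:ℝ) - 1)) ≤ 5 / 4 := by
      rw [mul_one_div, div_le_iff₀ (by linarith)]; linarith
    have h4 : (d:ℝ) * -(1 / ((d:ℝ) - 1)) ≤ d * Real.log (1 - 1 / (d:ℝ)) :=
      mul_le_mul_of_nonneg_left hlog (by linarith)
    have h6 : Real.exp (Real.log 2) = 2 := Real.exp_log (by norm_num)
    linarith

lemma aux_prod (d : ℕ) (hd : 3 ≤ d) (P : Fin d → Prop) [DecidablePred P] :
    2 * Real.exp (-2) * (((d:ℝ) ^ 2)⁻¹) ^ (d - (univ.filter P).card) ≤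
      ∏ i, (((d : ℝ) - 2) / ((d : ℝ) - 1) * (if P i then 1 else 0)
        + 1 / ((d : ℝ) * ((d : ℝ) - 1))) := by
  have h3 : (3:ℝ) ≤ d := by exact_mod_cast hd
  have h1 : (d:ℝ) - 1 ≠ 0 := by linarith
  have h0 : (d:ℝ) ≠ 0 := by linarith
  have e : ∀ i, (((d : ℝ) - 2) / ((d : ℝ) - 1) * (if P i then 1 else 0)
        + 1 / ((d : ℝ) * ((d : ℝ) - 1))) =
        if P i then 1 - 1 / (d:ℝ) else 1 / ((d : ℝ) * ((d : ℝ) - 1)) := by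
    intro i
    split_ifs
    · field_simp; ring
    · simp
  simp_rw [e]
  rw [prod_ite, prod_const, prod_const]
  have hc : (univ.filter fun i => ¬ P i).card = d - (univ.filter P).card := by
    have := card_filter_add_card_filter_not (s := (univ : Finset (Fin d))) P
    simp only [card_univ, Fintype.card_fin] at this
    omega
  have hle : (univ.filter P).card ≤ d := by
    simpa using card_le_univ (univ.filter P)
  rw [hc]
  have hnn : 0 ≤ 1 - 1 / (d:ℝ) := by
    rw [sub_nonneg, div_le_one (by linarith)]; linarith
  have hpos : 0 < 1 / (d:ℝ) := by positivity
  apply mul_le_mul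
  · exact (aux_pow d hd).trans (pow_le_pow_of_le_one hnn (by linarith) hle)
  · apply pow_le_pow_left₀ (by positivity)
    rw [← one_div]
    apply one_div_le_one_div_of_le
    · apply mul_pos <;> linarith
    · nlinarith
  · positivity
  · positivity

lemma piInd_toMat {d : ℕ} (ψ : Matrix (Fin d) (Fin d) ℝ) (f : Fin d → Fin d) :
    piInd ψ (toMat d f) = ∏ i, ψ i (f i) := by
  simp [piInd, toMat]

lemma toMat_row_eq {d : ℕ} (f : Fin d → Fin d) (i j : Fin d) :
    toMat d f i = toMat d f j ↔ f i = f j := by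
  constructor
  · intro h
    have := congrFun h (f i)
    by_contra hne
    simp [toMat, Ne.symm hne] at this
  · intro h; funext k; simp [toMat, h]

lemma toMat_row_self {d : ℕ} (f : Fin d → Fin d) (i : Fin d) :
    (toMat d f i = fun j => if j = i then (1 : ℝ) else 0) ↔ i = f i := by
  constructor
  · intro h
    have := congrFun h i
    by_contra hne
    simp [toMat, Ne.symm hne] at this
  · intro h; funext k; simp [toMat, ← h, eq_comm]

set_option maxHeartbeats 1000000 in
lemma aux_bound (d : ℕ) (hd : 2 ≤ d) (f : Fin d → Fin d) :
    Real.exp (-2) * (((d:ℝ) ^ 2)⁻¹) ^ (cB (toMat d f)) ≤ priorPi d (toMat d f) := by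
  rcases Nat.lt_or_ge d 3 with h | hd3
  · obtain rfl : d = 2 := by omega
    have hp : priorPi 2 (toMat 2 f) = 1 / 4 := by
      simp only [priorPi, piInd_toMat, psiK, psiSelf]
      norm_num
    rw [hp]
    have he := aux_exp
    have he' : Real.exp (-2) ≤ 4 / 27 := by
      rw [Real.exp_neg, inv_le_comm₀ (Real.exp_pos _) (by norm_num)]; linarith
    have : ((((2:ℕ):ℝ) ^ 2)⁻¹) ^ (cB (toMat 2 f)) ≤ 1 :=
      pow_le_one₀ (by positivity) (by norm_num)
    have hpos := Real.exp_pos (-2)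
    nlinarith
  have h3 : (3:ℝ) ≤ d := by exact_mod_cast hd3
  have hself := aux_prod d hd3 (fun i => i = f i)
  have hk := fun k => aux_prod d hd3 (fun i => f i = k)
  have eself : piInd (psiSelf d) (toMat d f) = ∏ i, (((d : ℝ) - 2) / ((d : ℝ) - 1) *
      (if i = f i then 1 else 0) + 1 / ((d : ℝ) * ((d : ℝ) - 1))) := piInd_toMat _ _
  have ek : ∀ k, piInd (psiK d k) (toMat d f) = ∏ i, (((d : ℝ) - 2) / ((d : ℝ) - 1) *
      (if f i = k then 1 else 0) + 1 / ((d : ℝ) * ((d : ℝ) - 1))) := fun k => piInd_toMat _ _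
  rw [← eself] at hself
  simp_rw [← ek] at hk
  have hself0 : 0 ≤ piInd (psiSelf d) (toMat d f) := le_trans (by positivity) hself
  have hk0 : ∀ k, 0 ≤ piInd (psiK d k) (toMat d f) := fun k => le_trans (by positivity) (hk k)
  have hsum0 : 0 ≤ ∑ k, piInd (psiK d k) (toMat d f) := sum_nonneg fun k _ => hk0 k
  have hS : dSelf (toMat d f) = (univ.filter fun i => i = f i).card := by
    unfold dSelf
    simp_rw [toMat_row_self]
    rw [Nat.card_eq_fintype_card, Fintype.card_subtype]
  have hU : ∃ k, dUnif (toMat d f) = (univ.filter fun i => f i = k).card := by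
    have hne : (univ : Finset (Fin d)).Nonempty := ⟨⟨0, by omega⟩, mem_univ _⟩
    obtain ⟨i, -, hi⟩ := exists_mem_eq_sup univ hne
      (fun i : Fin d => Nat.card {j : Fin d // toMat d f j = toMat d f i})
    refine ⟨f i, ?_⟩
    unfold dUnif
    rw [hi]
    simp_rw [toMat_row_eq]
    rw [Nat.card_eq_fintype_card, Fintype.card_subtype]
  obtain ⟨k, hU⟩ := hU
  unfold cB priorPi
  rcases min_choice (d - dSelf (toMat d f)) (d - dUnif (toMat d f) + 1) with hm | hm
  · rw [hm, hS]
    have : 0 ≤ 1 / (2 * (d:ℝ)) * ∑ k, piInd (psiK d k) (toMat d f) :=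
      mul_nonneg (by positivity) hsum0
    linarith
  · rw [hm, hU, pow_succ]
    have hs := single_le_sum (f := fun k => piInd (psiK d k) (toMat d f))
      (fun k _ => hk0 k) (mem_univ k)
    have h1 := (hk k).trans hs
    have h2 := mul_le_mul_of_nonneg_left h1 (show 0 ≤ 1 / (2 * (d:ℝ)) by positivity)
    set X := (((d:ℝ) ^ 2)⁻¹) ^ (d - (univ.filter fun i => f i = k).card) with hX
    have hX0 : 0 ≤ X := by positivity
    have h4 : ((d:ℝ) ^ 2)⁻¹ ≤ 1 / d := by
      rw [← one_div]
      apply one_div_le_one_div_of_le (by linarith); nlinarith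
    have h5 : 1 / (2 * (d:ℝ)) * (2 * Real.exp (-2) * X) = Real.exp (-2) * (X * (1 / d)) := by
      field_simp
    have h6 : Real.exp (-2) * (X * ((d:ℝ) ^ 2)⁻¹) ≤ Real.exp (-2) * (X * (1 / d)) := by
      gcongr
    linarith

/-- For any `d ≥ 2` and any binary row-stochastic `φ ∈ Φ_b`, the special prior
satisfies `log(1/π(φ)) ≤ 2 + 2 c_φ log d`, where `c_φ = min{d − d^self_φ, d − d^unif_φ + 1}`. -/
theorem stmt4 (d : ℕ) (hd : 2 ≤ d) (φ : Matrix (Fin d) (Fin d) ℝ) (hφ : φ ∈ PhiB d) :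
    Real.log (1 / priorPi d φ) ≤ 2 + 2 * (cB φ : ℝ) * Real.log d := by
  classical
  obtain ⟨f, rfl⟩ : ∃ f, toMat d f = φ := by
    unfold PhiB at hφ
    simpa using hφ
  have hb := aux_bound d hd f
  have hd0 : (0:ℝ) < d := by exact_mod_cast (by omega : 0 < d)
  have hl := Real.log_le_log (by positivity) hb
  rw [Real.log_mul (by positivity) (by positivity), Real.log_exp, Real.log_pow, Real.log_inv,
    Real.log_pow] at hl
  rw [one_div, Real.log_inv]
  push_cast at hl
  linarith
end

section
/- For any d ≥ 2 and any row-stochastic matrix φ ∈ S, the extended complexity measure satisfies c_φ ≤ min{d − d^self_φ, d − d^unif_φ + 1}, where d^self_φ is the number of indices i with φ_{i:} = e_i^T and d^unif_φ is the maximum multiplicity in the multiset of rows {φ_{1:}, …, φ_{d:}}. In particular, d^self_φ ≤ trace(φ) and d^unif_φ ≤ max_{q ∈ Q_φ} E_{φ'∼q}[d^unif_{φ'}]. -/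
open Finset

/-- The independent coupling of the rows has the right expectations. -/
lemma prod_marg {d : ℕ} (φ : Matrix (Fin d) (Fin d) ℝ) (hφ : RowStochastic φ) (k j : Fin d) :
    ∑ g : Fin d → Fin d, (∏ i, φ i (g i)) * (if g k = j then 1 else 0) = φ k j := by
  have h1 : ∀ g : Fin d → Fin d, (∏ i, φ i (g i)) * (if g k = j then 1 else 0)
      = ∏ i, (φ i (g i) * (if i = k then (if g i = j then 1 else 0) else 1)) := by
    intro g
    rw [Finset.prod_mul_distrib]
    congr 1
    rw [Finset.prod_ite_eq' Finset.univ k (fun i => if g i = j then (1:ℝ) else 0)]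
    simp
  rw [Finset.sum_congr rfl (fun g _ => h1 g),
    ← Fintype.prod_sum (fun i x => φ i x * (if i = k then (if x = j then 1 else 0) else 1))]
  rw [Finset.prod_eq_single k]
  · simp
  · intro b _ hb
    simp [hb, (hφ b).2]
  · simp

lemma prod_total {d : ℕ} (φ : Matrix (Fin d) (Fin d) ℝ) (hφ : RowStochastic φ) :
    ∑ g : Fin d → Fin d, (∏ i, φ i (g i)) = 1 := by
  rw [← Fintype.prod_sum (fun i x => φ i x)]
  exact Finset.prod_eq_one fun i _ => (hφ i).2

lemma exists_coupling {d : ℕ} (φ : Matrix (Fin d) (Fin d) ℝ) (hφ : RowStochastic φ)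
    (r : Fin d → Fin d) (hr : ∀ i, φ (r i) = φ i) :
    ∃ q ∈ QSet d φ, ∀ f, q f ≠ 0 → ∃ g : Fin d → Fin d, f = g ∘ r := by
  classical
  let q : (Fin d → Fin d) → ℝ := fun f =>
    ∑ g : Fin d → Fin d, if g ∘ r = f then ∏ i, φ i (g i) else 0
  have hq : ∀ F : (Fin d → Fin d) → ℝ,
      ∑ f, q f * F f = ∑ g : Fin d → Fin d, (∏ i, φ i (g i)) * F (g ∘ r) := by
    intro F
    simp only [q, Finset.sum_mul, ite_mul, zero_mul]
    rw [Finset.sum_comm]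
    simp
  refine ⟨q, ⟨?_, ?_, ?_⟩, ?_⟩
  · intro f
    refine Finset.sum_nonneg fun g _ => ?_
    split_ifs
    · exact Finset.prod_nonneg fun i _ => (hφ i).1 _
    · exact le_rfl
  · have := hq (fun _ => 1)
    simpa [prod_total φ hφ] using this
  · intro i j
    rw [hq]
    have := prod_marg φ hφ (r i) j
    rw [hr] at this
    simpa [toMat] using this
  · intro f hf
    obtain ⟨g, _, hg⟩ := Finset.exists_ne_zero_of_sum_ne_zero hf
    refine ⟨g, ?_⟩
    by_contra h
    exact hg (if_neg (fun h' => h h'.symm))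

lemma dUnif_le {d : ℕ} (φ : Matrix (Fin d) (Fin d) ℝ) : dUnif φ ≤ d := by
  refine Finset.sup_le fun i _ => ?_
  simpa using Nat.card_le_card_of_injective
    (Subtype.val : {j : Fin d // φ j = φ i} → Fin d) Subtype.val_injective

lemma dSelf_le {d : ℕ} (φ : Matrix (Fin d) (Fin d) ℝ) : dSelf φ ≤ d := by
  unfold dSelf
  simpa using Nat.card_le_card_of_injective
    (Subtype.val : {i : Fin d // φ i = fun j => if j = i then (1 : ℝ) else 0} → Fin d)
    Subtype.val_injective

lemma dSelf_le_trace {d : ℕ} (φ : Matrix (Fin d) (Fin d) ℝ) (hφ : RowStochastic φ) :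
    (dSelf φ : ℝ) ≤ Matrix.trace φ := by
  classical
  have h : (dSelf φ : ℝ) =
      ∑ i : Fin d, if φ i = (fun j => if j = i then (1 : ℝ) else 0) then (1:ℝ) else 0 := by
    rw [dSelf, Nat.card_eq_fintype_card, Fintype.card_subtype]
    rw [← Finset.sum_boole]
    refine Finset.sum_congr rfl fun i _ => ?_
    congr
  rw [h, Matrix.trace]
  refine Finset.sum_le_sum fun i _ => ?_
  split_ifs with h1
  · simp [h1]
  · exact (hφ i).1 i

lemma trace_toMat_le {d : ℕ} (f : Fin d → Fin d) :
    Matrix.trace (toMat d f) ≤ (dSelf (toMat d f) : ℝ) := by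
  classical
  rw [dSelf, Nat.card_eq_fintype_card, Fintype.card_subtype, Matrix.trace]
  rw [← Finset.sum_boole]
  refine Finset.sum_le_sum fun i _ => ?_
  by_cases h : f i = i
  · rw [if_pos]
    · simp [toMat, h]
    · funext j
      simp [toMat, h, eq_comm]
  · have : Matrix.diag (toMat d f) i = 0 := by simp [toMat, h]
    rw [this]
    split_ifs <;> norm_num

theorem stmt6 (d : ℕ) (hd : 2 ≤ d) (φ : Matrix (Fin d) (Fin d) ℝ) (hφ : RowStochastic φ) :
    cGen d φ ≤ min ((d : ℝ) - (dSelf φ : ℝ)) ((d : ℝ) - (dUnif φ : ℝ) + 1) ∧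
    (dSelf φ : ℝ) ≤ Matrix.trace φ ∧
    (dUnif φ : ℝ) ≤
      sSup ((fun q => ∑ f : Fin d → Fin d, q f * (dUnif (toMat d f) : ℝ)) '' QSet d φ) := by
  classical
  have hne : (Finset.univ : Finset (Fin d)).Nonempty := ⟨⟨0, by omega⟩, Finset.mem_univ _⟩
  obtain ⟨i₀, -, hi₀⟩ := Finset.exists_mem_eq_sup Finset.univ hne
    (fun i : Fin d => Nat.card {j : Fin d // φ j = φ i})
  have hU : dUnif φ = Nat.card {j : Fin d // φ j = φ i₀} := hi₀
  obtain ⟨q, hq, hsupp⟩ := exists_coupling φ hφ (fun i => if φ i = φ i₀ then i₀ else i)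
    (by
      intro i
      by_cases h : φ i = φ i₀
      · rw [if_pos h, h]
      · rw [if_neg h])
  have hunif : ∀ f, q f ≠ 0 → dUnif φ ≤ dUnif (toMat d f) := by
    intro f hf
    obtain ⟨g, rfl⟩ := hsupp f hf
    rw [hU]
    refine le_trans ?_ (Finset.le_sup (f := fun i : Fin d => Nat.card {j : Fin d //
      toMat d (g ∘ fun i => if φ i = φ i₀ then i₀ else i) j =
      toMat d (g ∘ fun i => if φ i = φ i₀ then i₀ else i) i}) (Finset.mem_univ i₀))
    refine Nat.card_le_card_of_injective
      (fun x => ⟨x.1, ?_⟩) ?_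
    · funext j
      simp [toMat, x.2]
    · intro x y hxy
      simpa [Subtype.ext_iff] using hxy
  obtain ⟨q0, q1, qm⟩ := id hq
  have hcge : cGen d φ ≤ ∑ f : Fin d → Fin d, q f * (cB (toMat d f) : ℝ) := by
    refine csInf_le ⟨0, ?_⟩ ⟨q, hq, rfl⟩
    rintro _ ⟨p, hp, rfl⟩
    exact Finset.sum_nonneg fun f _ => mul_nonneg (hp.1 f) (Nat.cast_nonneg _)
  have htr : ∑ f, q f * Matrix.trace (toMat d f) = Matrix.trace φ := by
    simp only [Matrix.trace, Finset.mul_sum, Matrix.diag_apply]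
    rw [Finset.sum_comm]
    exact Finset.sum_congr rfl fun i _ => qm i i
  have hconst : ∀ c : ℝ, ∑ f, q f * c = c := by
    intro c
    rw [← Finset.sum_mul, q1, one_mul]
  refine ⟨le_min ?_ ?_, dSelf_le_trace φ hφ, ?_⟩
  · have h1 : ∑ f : Fin d → Fin d, q f * (cB (toMat d f) : ℝ) ≤
        ∑ f, q f * ((d : ℝ) - Matrix.trace (toMat d f)) := by
      refine Finset.sum_le_sum fun f _ => mul_le_mul_of_nonneg_left ?_ (q0 f)
      have h2 : (cB (toMat d f) : ℝ) ≤ ((d - dSelf (toMat d f) : ℕ) : ℝ) :=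
        Nat.cast_le.mpr (min_le_left _ _)
      rw [Nat.cast_sub (dSelf_le _)] at h2
      linarith [trace_toMat_le f]
    simp only [mul_sub, Finset.sum_sub_distrib, hconst, htr] at h1
    linarith [dSelf_le_trace φ hφ]
  · refine hcge.trans ?_
    rw [← hconst ((d : ℝ) - (dUnif φ : ℝ) + 1)]
    refine Finset.sum_le_sum fun f _ => ?_
    by_cases hf : q f = 0
    · simp [hf]
    refine mul_le_mul_of_nonneg_left ?_ (q0 f)
    have h2 : (cB (toMat d f) : ℝ) ≤ ((d - dUnif (toMat d f) + 1 : ℕ) : ℝ) :=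
      Nat.cast_le.mpr (min_le_right _ _)
    rw [Nat.cast_add, Nat.cast_sub (dUnif_le _), Nat.cast_one] at h2
    have h3 : (dUnif φ : ℝ) ≤ dUnif (toMat d f) := Nat.cast_le.mpr (hunif f hf)
    linarith
  · have h1 : (dUnif φ : ℝ) ≤ ∑ f : Fin d → Fin d, q f * (dUnif (toMat d f) : ℝ) := by
      rw [← hconst (dUnif φ : ℝ)]
      refine Finset.sum_le_sum fun f _ => ?_
      by_cases hf : q f = 0
      · simp [hf]
      exact mul_le_mul_of_nonneg_left (Nat.cast_le.mpr (hunif f hf)) (q0 f)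
    refine h1.trans (le_csSup ⟨(d : ℝ), ?_⟩ ⟨q, hq, rfl⟩)
    rintro _ ⟨p, hp, rfl⟩
    calc ∑ f : Fin d → Fin d, p f * (dUnif (toMat d f) : ℝ) ≤ ∑ f, p f * (d : ℝ) :=
          Finset.sum_le_sum fun f _ =>
            mul_le_mul_of_nonneg_left (Nat.cast_le.mpr (dUnif_le _)) (hp.1 f)
      _ = d := by rw [← Finset.sum_mul, hp.2.1, one_mul]
end

section
/- The complexity measures can differ by a factor of order d: for any d ≥ 3 and any 0 < ε < 1, the row-stochastic matrix φ = (1−ε)·1 e_1^T + ε·I ∈ S satisfies c_φ ≤ 1 − ε (hence c_φ ≤ 1), while min{d − d^self_φ, d − d^unif_φ + 1} = d − 1. -/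
open Finset

/-- For any `d ≥ 3` and `0 < ε < 1`, the row-stochastic matrix
`φ = (1−ε)·1 e_1^T + ε·I` satisfies `c_φ ≤ 1 − ε` (hence `c_φ ≤ 1`), while
`min{d − d^self_φ, d − d^unif_φ + 1} = d − 1`. -/
theorem stmt7 (d : ℕ) (hd : 3 ≤ d) (ε : ℝ) (hε0 : 0 < ε) (hε1 : ε < 1)
    (φ : Matrix (Fin d) (Fin d) ℝ)
    (hφ : ∀ i j, φ i j =
      (1 - ε) * (if j = (⟨0, by omega⟩ : Fin d) then 1 else 0) + ε * (if i = j then 1 else 0)) :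
    cGen d φ ≤ 1 - ε ∧ cGen d φ ≤ 1 ∧ min (d - dSelf φ) (d - dUnif φ + 1) = d - 1 := by
  have hz : ∃ z : Fin d, z = ⟨0, by omega⟩ := ⟨_, rfl⟩
  obtain ⟨z, hz⟩ := hz
  rw [← hz] at hφ
  have hself : dSelf φ = 1 := by
    unfold dSelf
    rw [Nat.card_eq_one_iff_unique]
    refine ⟨⟨?_⟩, ⟨⟨z, ?_⟩⟩⟩
    · have key : ∀ i : Fin d, (φ i = fun j => if j = i then (1 : ℝ) else 0) → i = z := by
        intro i hi
        by_contra hne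
        have h1 := congrFun hi z
        rw [hφ] at h1
        simp [hne, Ne.symm hne] at h1
        linarith
      rintro ⟨a, ha⟩ ⟨b, hb⟩
      exact Subtype.ext ((key a ha).trans (key b hb).symm)
    · funext j
      rw [hφ]
      by_cases h : j = z
      · simp [h]
      · simp [h, Ne.symm h]
  have hinj : ∀ i j : Fin d, φ j = φ i → j = i := by
    intro i j h
    by_contra hne
    have h1 := congrFun h i
    have h2 := congrFun h j
    rw [hφ, hφ] at h1
    simp [hne] at h1
    linarith
  have hunif : dUnif φ = 1 := by
    unfold dUnif
    have h1 : ∀ i : Fin d, Nat.card {j : Fin d // φ j = φ i} = 1 := by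
      intro i
      rw [Nat.card_eq_one_iff_unique]
      refine ⟨⟨?_⟩, ⟨⟨i, rfl⟩⟩⟩
      rintro ⟨a, ha⟩ ⟨b, hb⟩
      exact Subtype.ext ((hinj i a ha).trans (hinj i b hb).symm)
    simp only [h1]
    exact Finset.sup_const ⟨z, Finset.mem_univ z⟩ 1
  have hcid : cB (toMat d id) = 0 := by
    have : dSelf (toMat d id) = d := by
      unfold dSelf
      have h : ∀ i : Fin d, toMat d id i = fun j => if j = i then (1 : ℝ) else 0 := by
        intro i
        funext j
        simp [toMat, eq_comm]
      simp [h]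
    simp [cB, this]
  have hcz : cB (toMat d fun _ => z) ≤ 1 := by
    have : d ≤ dUnif (toMat d fun _ => z) := by
      unfold dUnif
      refine le_trans ?_ (Finset.le_sup (Finset.mem_univ z))
      have h : ∀ j : Fin d, toMat d (fun _ => z) j = toMat d (fun _ => z) z := fun j => rfl
      simp [h]
    unfold cB
    refine (min_le_right _ _).trans ?_
    omega
  have hmain : cGen d φ ≤ 1 - ε := by
    have hsum : ∀ g : (Fin d → Fin d) → ℝ,
        ∑ f : Fin d → Fin d, ((1 - ε) * (if f = (fun _ => z) then 1 else 0)
          + ε * (if f = id then 1 else 0)) * g f = (1 - ε) * g (fun _ => z) + ε * g id := by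
      intro g
      simp [add_mul, Finset.sum_add_distrib, mul_assoc, ← Finset.mul_sum]
    have hbdd : BddBelow
        ((fun q => ∑ f : Fin d → Fin d, q f * (cB (toMat d f) : ℝ)) '' QSet d φ) := by
      refine ⟨0, ?_⟩
      rintro _ ⟨q, hq, rfl⟩
      exact Finset.sum_nonneg fun f _ => mul_nonneg (hq.1 f) (Nat.cast_nonneg _)
    refine (csInf_le hbdd ⟨fun f => (1 - ε) * (if f = (fun _ => z) then 1 else 0)
          + ε * (if f = id then 1 else 0), ⟨?_, ?_, ?_⟩, rfl⟩).trans ?_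
    · intro f
      have : 0 ≤ 1 - ε := by linarith
      positivity
    · have := hsum fun _ => 1
      simp only [mul_one] at this
      rw [this]
      ring
    · intro i j
      rw [hsum fun f => toMat d f i j, hφ]
      simp [toMat, eq_comm]
    · have h2 := hsum fun f => (cB (toMat d f) : ℝ)
      refine h2.le.trans ?_
      have h3 : (cB (toMat d fun _ => z) : ℝ) ≤ 1 := by exact_mod_cast hcz
      rw [hcid]
      push_cast
      nlinarith
  refine ⟨hmain, by linarith, ?_⟩
  rw [hself, hunif]
  omega
end

section
/- Multiplicative Weights Update with an arbitrary prior satisfies a KL-divergence regret bound: let A be a finite set, η > 0, x_1 ∈ Δ(A) with full support, and let ℓ_1, …, ℓ_T ∈ [0,∞)^A be arbitrary nonnegative loss vectors. Define x_{t+1}(i) ∝ x_t(i)·exp(−η ℓ_t(i)) for each i ∈ A. Then for every comparator q ∈ Δ(A), Σ_{t=1}^T ⟨x_t − q, ℓ_t⟩ ≤ KL(q, x_1)/η + η Σ_{t=1}^T ‖ℓ_t‖_∞², where KL(p,q) = Σ_i p(i) log(p(i)/q(i)). -/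
open Finset

lemma mwu_exp_bound (u : ℝ) (hu : 0 ≤ u) : Real.exp (-u) ≤ 1 - u + u ^ 2 := by
  rw [Real.exp_neg, inv_le_iff_one_le_mul₀ (Real.exp_pos u)]
  have h1 := Real.add_one_le_exp u
  have h2 : 0 ≤ 1 - u + u ^ 2 := by nlinarith [sq_nonneg (u - 1)]
  have h3 : 0 ≤ u ^ 3 := by positivity
  nlinarith [mul_le_mul_of_nonneg_left h1 h2]

lemma mwu_gibbs {A : Type*} [Fintype A] (q y : A → ℝ) (hq : ∀ i, 0 ≤ q i)
    (hqs : ∑ i, q i = 1) (hy : ∀ i, 0 < y i) (hys : ∑ i, y i = 1) :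
    ∑ i, q i * Real.log (y i) ≤ ∑ i, q i * Real.log (q i) := by
  have h : ∀ i, q i * Real.log (y i) ≤ q i * Real.log (q i) + (y i - q i) := by
    intro i
    rcases (hq i).eq_or_lt with h0 | h0
    · rw [← h0]
      have := hy i
      simp
      linarith
    · have h1 := Real.log_le_sub_one_of_pos (div_pos (hy i) h0)
      rw [Real.log_div (hy i).ne' h0.ne'] at h1
      have h2 := mul_le_mul_of_nonneg_left h1 h0.le
      have h3 : q i * (y i / q i - 1) = y i - q i := by field_simp
      linarith
  have h2 := Finset.sum_le_sum (fun i (_ : i ∈ Finset.univ) => h i)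
  rw [Finset.sum_add_distrib, Finset.sum_sub_distrib, hqs, hys] at h2
  linarith

lemma mwu_step {A : Type*} [Fintype A] (η : ℝ) (hη : 0 < η) (x y l : A → ℝ)
    (hx : ∀ i, 0 < x i) (hxs : ∑ i, x i = 1) (hl : ∀ i, 0 ≤ l i)
    (hy : ∀ i, y i = x i * Real.exp (-η * l i) / ∑ j, x j * Real.exp (-η * l j))
    (q : A → ℝ) (hqs : ∑ i, q i = 1) :
    (∀ i, 0 < y i) ∧ ∑ i, y i = 1 ∧
    η * ∑ i, (x i - q i) * l i ≤
      ∑ i, q i * Real.log (y i) - ∑ i, q i * Real.log (x i) + η ^ 2 * (⨆ i, |l i|) ^ 2 := by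
  have hne : Nonempty A := by
    by_contra h
    rw [not_nonempty_iff] at h
    simp at hxs
  set M := ⨆ i, |l i| with hM
  have hlM : ∀ i, l i ≤ M := fun i =>
    (le_abs_self _).trans (le_ciSup (f := fun i => |l i|) (Set.finite_range _).bddAbove i)
  set Z := ∑ j, x j * Real.exp (-η * l j) with hZ
  have hZpos : 0 < Z :=
    Finset.sum_pos (fun j _ => mul_pos (hx j) (Real.exp_pos _)) Finset.univ_nonempty
  refine ⟨fun i => ?_, ?_, ?_⟩
  · rw [hy]
    exact div_pos (mul_pos (hx i) (Real.exp_pos _)) hZpos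
  · simp_rw [hy]
    rw [← Finset.sum_div, ← hZ, div_self hZpos.ne']
  · have hlog : ∀ i, q i * Real.log (y i) =
        q i * Real.log (x i) - η * (q i * l i) - q i * Real.log Z := by
      intro i
      rw [hy, Real.log_div (mul_pos (hx i) (Real.exp_pos _)).ne' hZpos.ne',
        Real.log_mul (hx i).ne' (Real.exp_pos _).ne', Real.log_exp]
      ring
    have hZle : Z ≤ 1 - η * ∑ i, x i * l i + η ^ 2 * M ^ 2 := by
      have h : ∀ i, x i * Real.exp (-η * l i) ≤
          x i - η * (x i * l i) + x i * (η ^ 2 * M ^ 2) := by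
        intro i
        have h1 := mwu_exp_bound (η * l i) (mul_nonneg hη.le (hl i))
        have h2 : l i ^ 2 ≤ M ^ 2 := pow_le_pow_left₀ (hl i) (hlM i) 2
        have h3 : η ^ 2 * l i ^ 2 ≤ η ^ 2 * M ^ 2 := by gcongr
        rw [neg_mul]
        have h4 : Real.exp (-(η * l i)) ≤ 1 - η * l i + η ^ 2 * M ^ 2 := by
          rw [mul_pow] at h1
          linarith
        have h5 := mul_le_mul_of_nonneg_left h4 (hx i).le
        linarith
      have h2 := Finset.sum_le_sum (fun i (_ : i ∈ Finset.univ) => h i)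
      rw [Finset.sum_add_distrib, Finset.sum_sub_distrib, hxs, ← Finset.mul_sum,
        ← Finset.sum_mul, hxs, one_mul] at h2
      exact h2
    have hZlog := Real.log_le_sub_one_of_pos hZpos
    simp_rw [hlog, sub_mul]
    rw [Finset.sum_sub_distrib, Finset.sum_sub_distrib, Finset.sum_sub_distrib,
      ← Finset.mul_sum, ← Finset.sum_mul, hqs, one_mul]
    linarith

/-- Multiplicative Weights Update with an arbitrary (full-support) prior on a
finite set `A` satisfies, against any comparator `q ∈ Δ(A)` and any nonnegative losses,
`Σ_{t=1}^T ⟨x_t − q, ℓ_t⟩ ≤ KL(q, x_1)/η + η Σ_{t=1}^T ‖ℓ_t‖_∞²`. -/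
theorem stmt8 {A : Type*} [Fintype A] (T : ℕ) (η : ℝ) (hη : 0 < η)
    (x ℓ : ℕ → A → ℝ)
    (hx1pos : ∀ i, 0 < x 1 i) (hx1sum : ∑ i, x 1 i = 1)
    (hℓ : ∀ t ∈ Finset.Icc 1 T, ∀ i, 0 ≤ ℓ t i)
    (hupd : ∀ t ∈ Finset.Icc 1 T, ∀ i,
      x (t + 1) i = x t i * Real.exp (-η * ℓ t i) / ∑ j, x t j * Real.exp (-η * ℓ t j))
    (q : A → ℝ) (hqpos : ∀ i, 0 ≤ q i) (hqsum : ∑ i, q i = 1) :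
    ∑ t ∈ Finset.Icc 1 T, ∑ i, (x t i - q i) * ℓ t i ≤
      (∑ i, q i * Real.log (q i / x 1 i)) / η +
      η * ∑ t ∈ Finset.Icc 1 T, (⨆ i, |ℓ t i|) ^ 2 := by
  have key : ∀ n, n ≤ T → (∀ i, 0 < x (n + 1) i) ∧ ∑ i, x (n + 1) i = 1 ∧
      η * ∑ t ∈ Finset.Icc 1 n, ∑ i, (x t i - q i) * ℓ t i ≤
        ∑ i, q i * Real.log (x (n + 1) i) - ∑ i, q i * Real.log (x 1 i) +
        η ^ 2 * ∑ t ∈ Finset.Icc 1 n, (⨆ i, |ℓ t i|) ^ 2 := by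
    intro n
    induction n with
    | zero =>
      intro _
      exact ⟨hx1pos, hx1sum, by simp⟩
    | succ n ih =>
      intro hn
      obtain ⟨h1, h2, h3⟩ := ih (by omega)
      have hmem : n + 1 ∈ Finset.Icc 1 T := Finset.mem_Icc.mpr ⟨by omega, hn⟩
      obtain ⟨g1, g2, g3⟩ := mwu_step η hη (x (n + 1)) (x (n + 1 + 1)) (ℓ (n + 1)) h1 h2
        (hℓ _ hmem) (hupd _ hmem) q hqsum
      refine ⟨g1, g2, ?_⟩
      rw [Finset.sum_Icc_succ_top (by omega), Finset.sum_Icc_succ_top (by omega),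
        mul_add, mul_add]
      linarith
  obtain ⟨h1, h2, h3⟩ := key T le_rfl
  have hg := mwu_gibbs q (x (T + 1)) hqpos hqsum h1 h2
  have hkl : ∑ i, q i * Real.log (q i / x 1 i) =
      ∑ i, q i * Real.log (q i) - ∑ i, q i * Real.log (x 1 i) := by
    rw [← Finset.sum_sub_distrib]
    refine Finset.sum_congr rfl fun i _ => ?_
    rcases (hqpos i).eq_or_lt with h0 | h0
    · simp [← h0]
    · rw [Real.log_div h0.ne' (hx1pos i).ne']
      ring
  refine le_of_mul_le_mul_left ?_ hη
  rw [mul_add, mul_div_cancel₀ _ hη.ne', ← mul_assoc, ← pow_two, hkl]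
  linarith
end

section
/- For any d ≥ 2, any φ ∈ S and any q ∈ Q_φ, the KL divergence to the special prior satisfies KL(q, π) ≤ 2 d log d + 1. Consequently, letting M = 2⌈log₂ d⌉ and η_h = √(2^h/T) for h ∈ [M] (with T ≥ 1), there exists h ∈ [M] such that η_h ≤ max{√(KL(q,π)/T), √(2/T)} ≤ 2 η_h. -/
open Finset

theorem aux_piInd (d : ℕ) (ψ : Matrix (Fin d) (Fin d) ℝ) (c : ℝ) (hc : 0 ≤ c)
    (h : ∀ i j, c ≤ ψ i j) (f : Fin d → Fin d) : c ^ d ≤ piInd ψ (toMat d f) := by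
  have h1 : piInd ψ (toMat d f) = ∏ i, ψ i (f i) := by
    unfold piInd toMat
    refine Finset.prod_congr rfl fun i _ => ?_
    simp
  rw [h1]
  calc c ^ d = ∏ _i : Fin d, c := by simp
    _ ≤ _ := Finset.prod_le_prod (fun _ _ => hc) (fun i _ => h i (f i))

theorem aux_prior (d : ℕ) (hd : 2 ≤ d) (f : Fin d → Fin d) :
    (1 / ((d : ℝ) * ((d : ℝ) - 1))) ^ d ≤ priorPi d (toMat d f) := by
  have hd' : (2 : ℝ) ≤ d := by exact_mod_cast hd
  have hc : 0 ≤ 1 / ((d : ℝ) * ((d : ℝ) - 1)) := by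
    have : 0 < (d : ℝ) - 1 := by linarith
    positivity
  have hr : 0 ≤ ((d : ℝ) - 2) / ((d : ℝ) - 1) := div_nonneg (by linarith) (by linarith)
  have h1 : ∀ k, (1 / ((d : ℝ) * ((d : ℝ) - 1))) ^ d ≤ piInd (psiK d k) (toMat d f) := by
    intro k
    refine aux_piInd d _ _ hc (fun i j => ?_) f
    unfold psiK
    refine le_add_of_nonneg_left (mul_nonneg hr ?_)
    split_ifs <;> norm_num
  have h2 : (1 / ((d : ℝ) * ((d : ℝ) - 1))) ^ d ≤ piInd (psiSelf d) (toMat d f) := by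
    refine aux_piInd d _ _ hc (fun i j => ?_) f
    unfold psiSelf
    refine le_add_of_nonneg_left (mul_nonneg hr ?_)
    split_ifs <;> norm_num
  unfold priorPi
  generalize (1 / ((d : ℝ) * ((d : ℝ) - 1))) ^ d = c at *
  have h3 : (d : ℝ) * c ≤ ∑ k : Fin d, piInd (psiK d k) (toMat d f) := by
    calc (d : ℝ) * c = ∑ _k : Fin d, c := by simp
      _ ≤ _ := Finset.sum_le_sum fun k _ => h1 k
  have h4 : 1 / (2 * (d : ℝ)) * ((d : ℝ) * c) ≤
      1 / (2 * (d : ℝ)) * ∑ k : Fin d, piInd (psiK d k) (toMat d f) :=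
    mul_le_mul_of_nonneg_left h3 (by positivity)
  have h5 : 1 / (2 * (d : ℝ)) * ((d : ℝ) * c) = c / 2 := by
    field_simp
  linarith

theorem aux_kl (d : ℕ) (hd : 2 ≤ d) (q : (Fin d → Fin d) → ℝ) (h0 : ∀ f, 0 ≤ q f)
    (h1 : ∑ f, q f = 1) : klPrior d q ≤ 2 * (d : ℝ) * Real.log d := by
  have hd' : (2 : ℝ) ≤ d := by exact_mod_cast hd
  have hdm : 0 < (d : ℝ) - 1 := by linarith
  have hc : 0 < 1 / ((d : ℝ) * ((d : ℝ) - 1)) := by positivity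
  have key : ∀ f, q f * Real.log (q f / priorPi d (toMat d f)) ≤
      q f * (2 * (d : ℝ) * Real.log d) := by
    intro f
    rcases (h0 f).eq_or_lt with h | h
    · rw [← h]; simp
    · refine mul_le_mul_of_nonneg_left ?_ h.le
      have hp := aux_prior d hd f
      have hpp : 0 < priorPi d (toMat d f) := lt_of_lt_of_le (pow_pos hc d) hp
      have hq1 : q f ≤ 1 := by
        rw [← h1]; exact Finset.single_le_sum (fun i _ => h0 i) (Finset.mem_univ f)
      rw [Real.log_div h.ne' hpp.ne']
      have e1 : Real.log (q f) ≤ 0 := Real.log_nonpos h.le hq1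
      have e2 := Real.log_le_log (pow_pos hc d) hp
      rw [Real.log_pow, one_div, Real.log_inv, Real.log_mul (by linarith) hdm.ne'] at e2
      have e3 : Real.log ((d : ℝ) - 1) ≤ Real.log d := Real.log_le_log hdm (by linarith)
      have e4 : (d : ℝ) * Real.log ((d : ℝ) - 1) ≤ d * Real.log d :=
        mul_le_mul_of_nonneg_left e3 (by linarith)
      nlinarith
  unfold klPrior
  refine (Finset.sum_le_sum fun f _ => key f).trans ?_
  rw [← Finset.sum_mul, h1, one_mul]

/-- For any `d ≥ 2`, any row-stochastic `φ` and any `q ∈ Q_φ`,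
`KL(q, π) ≤ 2 d log d + 1`; consequently, with `M = 2⌈log₂ d⌉` and `η_h = √(2^h/T)`, there is
`h ∈ [M]` with `η_h ≤ max{√(KL(q,π)/T), √(2/T)} ≤ 2 η_h`. -/
theorem stmt9 (d T : ℕ) (hd : 2 ≤ d) (hT : 1 ≤ T)
    (φ : Matrix (Fin d) (Fin d) ℝ) (hφ : RowStochastic φ)
    (q : (Fin d → Fin d) → ℝ) (hq : q ∈ QSet d φ) :
    klPrior d q ≤ 2 * (d : ℝ) * Real.log d + 1 ∧
    ∃ h ∈ Finset.Icc 1 (2 * Nat.clog 2 d),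
      Real.sqrt ((2 : ℝ) ^ h / (T : ℝ)) ≤
          max (Real.sqrt (klPrior d q / (T : ℝ))) (Real.sqrt (2 / (T : ℝ))) ∧
      max (Real.sqrt (klPrior d q / (T : ℝ))) (Real.sqrt (2 / (T : ℝ))) ≤
          2 * Real.sqrt ((2 : ℝ) ^ h / (T : ℝ)) := by
  have hd' : (2 : ℝ) ≤ d := by exact_mod_cast hd
  have hT' : (0 : ℝ) < T := by exact_mod_cast hT
  have hkl := aux_kl d hd q hq.1 hq.2.1
  refine ⟨by linarith, ?_⟩
  have hmax : max (Real.sqrt (klPrior d q / (T : ℝ))) (Real.sqrt (2 / (T : ℝ))) =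
      Real.sqrt (max (klPrior d q) 2 / (T : ℝ)) := by
    rcases le_total (klPrior d q) 2 with h | h
    · rw [max_eq_right h, max_eq_right]
      exact Real.sqrt_le_sqrt (by gcongr)
    · rw [max_eq_left h, max_eq_left]
      exact Real.sqrt_le_sqrt (by gcongr)
  rw [hmax]
  have hX2 : 2 ≤ max (klPrior d q) 2 := le_max_right _ _
  have hXd : max (klPrior d q) 2 ≤ 2 * (d : ℝ) ^ 2 := by
    refine max_le ?_ (by nlinarith)
    have : Real.log d ≤ d := (Real.log_le_sub_one_of_pos (by linarith)).trans (by linarith)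
    nlinarith
  generalize max (klPrior d q) 2 = X at *
  set M := 2 * Nat.clog 2 d with hM
  have hM1 : 1 ≤ M := by
    have : 0 < Nat.clog 2 d := Nat.clog_pos (by norm_num) hd
    omega
  have hMd : (d : ℝ) ^ 2 ≤ 2 ^ M := by
    have : d ≤ 2 ^ Nat.clog 2 d := Nat.le_pow_clog (by norm_num) d
    have h2 : (d : ℝ) ≤ 2 ^ Nat.clog 2 d := by exact_mod_cast this
    rw [hM, mul_comm, pow_mul]
    gcongr
  have main : ∃ h ∈ Finset.Icc 1 M, (2 : ℝ) ^ h ≤ X ∧ X ≤ 4 * 2 ^ h := by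
    obtain ⟨n, hn1, hn2⟩ := exists_nat_pow_near (by linarith : 1 ≤ X) (one_lt_two : (1 : ℝ) < 2)
    have hn : 1 ≤ n := by
      by_contra hh
      have : n = 0 := by omega
      subst this
      norm_num at hn2
      linarith
    rcases le_total n M with h | h
    · refine ⟨n, Finset.mem_Icc.2 ⟨hn, h⟩, hn1, ?_⟩
      rw [pow_succ] at hn2
      have : (0 : ℝ) < 2 ^ n := by positivity
      linarith
    · refine ⟨M, Finset.mem_Icc.2 ⟨hM1, le_rfl⟩, ?_, by nlinarith⟩
      exact (pow_le_pow_right₀ (by norm_num) h).trans hn1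
  obtain ⟨h, hh, ha, hb⟩ := main
  refine ⟨h, hh, Real.sqrt_le_sqrt (by gcongr), ?_⟩
  have h4 : 2 * Real.sqrt ((2 : ℝ) ^ h / (T : ℝ)) = Real.sqrt (4 * 2 ^ h / (T : ℝ)) := by
    rw [mul_div_assoc, Real.sqrt_mul (by norm_num), show (4 : ℝ) = 2 ^ 2 by norm_num,
      Real.sqrt_sq (by norm_num)]
  rw [h4]
  exact Real.sqrt_le_sqrt (by gcongr)
end

section
/- Kernelized MWU with the special non-uniform prior exactly simulates MWU over all binary row-stochastic matrices: fix d ≥ 2, η > 0, and sequences p_1,…,p_T ∈ Δ(d), ℓ_1,…,ℓ_T ∈ [0,1]^d. Let q_t ∈ Δ(Φ_b) be defined by q_t(φ) ∝ π(φ)·exp(−η Σ_{τ=1}^{t−1} ⟨φ, p_τ ℓ_τ^T⟩), and let B_t ∈ R^{d×d} be defined entrywise by (B_t)_{ij} = exp(−η Σ_{τ=1}^{t−1} p_{τ,i} ℓ_{τ,j}). Then for every t ∈ [T] and all i, j ∈ [d], (E_{φ∼q_t}[φ])_{ij} = 1 − K(B_t, 1 1^T − e_i e_j^T) / K(B_t,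 1 1^T), where K(B,A) = Σ_{φ ∈ Φ_b} π(φ) Π_{u,v: φ_{uv}=1} B_{uv} A_{uv}. -/
open Finset

theorem toMat_inj (d : ℕ) : Function.Injective (toMat d) := by
  intro f g h
  funext i
  have h1 := congrFun (congrFun h i) (g i)
  simp only [toMat, if_true] at h1
  by_contra hne
  rw [if_neg hne] at h1
  exact zero_ne_one h1

theorem kernelK_eq (d : ℕ) (B A : Matrix (Fin d) (Fin d) ℝ) :
    kernelK d B A = ∑ f : Fin d → Fin d,
      priorPi d (toMat d f) * ∏ i, (B i (f i) * A i (f i)) := by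
  classical
  unfold kernelK PhiB
  rw [Finset.sum_image (fun a _ b _ h => toMat_inj d h)]
  refine Finset.sum_congr rfl fun f _ => ?_
  congr 1
  refine Finset.prod_congr rfl fun i _ => ?_
  rw [Finset.prod_eq_single (f i)]
  · simp [toMat]
  · intro j _ hj
    simp [toMat, Ne.symm hj]
  · simp

theorem piInd_pos {d : ℕ} (ψ : Matrix (Fin d) (Fin d) ℝ) (h : ∀ i j, 0 < ψ i j)
    (f : Fin d → Fin d) : 0 < piInd ψ (toMat d f) := by
  unfold piInd
  refine Finset.prod_pos fun i _ => ?_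
  simp only [toMat, mul_ite, mul_one, mul_zero, Finset.sum_ite_eq, Finset.mem_univ, if_true]
  exact h _ _

theorem priorPi_pos (d : ℕ) (hd : 2 ≤ d) (f : Fin d → Fin d) :
    0 < priorPi d (toMat d f) := by
  have h2 : (2 : ℝ) ≤ d := by exact_mod_cast hd
  have ha : 0 ≤ ((d : ℝ) - 2) / ((d : ℝ) - 1) := div_nonneg (by linarith) (by linarith)
  have hb : 0 < 1 / ((d : ℝ) * ((d : ℝ) - 1)) :=
    one_div_pos.mpr (mul_pos (by linarith) (by linarith))
  have hK : ∀ k, 0 < piInd (psiK d k) (toMat d f) := fun k => by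
    refine piInd_pos _ (fun i j => ?_) f
    unfold psiK
    split_ifs <;> linarith
  have hS : 0 < piInd (psiSelf d) (toMat d f) := by
    refine piInd_pos _ (fun i j => ?_) f
    unfold psiSelf
    split_ifs <;> linarith
  unfold priorPi
  have hs : 0 ≤ ∑ k : Fin d, piInd (psiK d k) (toMat d f) :=
    Finset.sum_nonneg fun k _ => (hK k).le
  have : 0 ≤ 1 / (2 * (d : ℝ)) * ∑ k : Fin d, piInd (psiK d k) (toMat d f) :=
    mul_nonneg (by positivity) hs
  linarith

theorem exp_loss (d : ℕ) (η : ℝ) (s : Finset ℕ) (p ℓ : ℕ → Fin d → ℝ) (f : Fin d → Fin d) :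
    Real.exp (-η * ∑ τ ∈ s, lossInner (toMat d f) (p τ) (ℓ τ)) =
      ∏ i, Real.exp (-η * ∑ τ ∈ s, p τ i * ℓ τ (f i)) := by
  rw [← Real.exp_sum, ← Finset.mul_sum, Finset.sum_comm]
  congr 2
  refine Finset.sum_congr rfl fun τ _ => ?_
  simp [lossInner, toMat]

/-- Kernelized MWU with the special prior exactly simulates MWU over `Φ_b`:
with `q_t(φ) ∝ π(φ)·exp(−η Σ_{τ<t} ⟨φ, p_τ ℓ_τ^T⟩)` and `(B_t)_{ij} = exp(−η Σ_{τ<t} p_{τ,i} ℓ_{τ,j})`,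
for every `t ∈ [T]` and all `i, j`,
`(E_{φ∼q_t}[φ])_{ij} = 1 − K(B_t, 1 1^T − e_i e_j^T) / K(B_t, 1 1^T)`. -/
theorem stmt11 (d T : ℕ) (hd : 2 ≤ d) (η : ℝ) (hη : 0 < η)
    (p ℓ : ℕ → Fin d → ℝ)
    (hp : ∀ t ∈ Finset.Icc 1 T, InSimplex d (p t))
    (hℓ : ∀ t ∈ Finset.Icc 1 T, ∀ i, 0 ≤ ℓ t i ∧ ℓ t i ≤ 1)
    (q : ℕ → (Fin d → Fin d) → ℝ) (B : ℕ → Matrix (Fin d) (Fin d) ℝ)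
    (hq : ∀ t ∈ Finset.Icc 1 T, ∀ f,
      q t f =
        priorPi d (toMat d f) *
            Real.exp (-η * ∑ τ ∈ Finset.Ico 1 t, lossInner (toMat d f) (p τ) (ℓ τ)) /
          ∑ g, priorPi d (toMat d g) *
            Real.exp (-η * ∑ τ ∈ Finset.Ico 1 t, lossInner (toMat d g) (p τ) (ℓ τ)))
    (hB : ∀ t ∈ Finset.Icc 1 T, ∀ i j,
      B t i j = Real.exp (-η * ∑ τ ∈ Finset.Ico 1 t, p τ i * ℓ τ j)) :
    ∀ t ∈ Finset.Icc 1 T, ∀ i j,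
      mixMat d (q t) i j =
        1 - kernelK d (B t) (fun u v => if u = i ∧ v = j then 0 else 1) /
              kernelK d (B t) (fun _ _ => 1) := by
  intro t ht i j
  have hE : ∀ f, Real.exp (-η * ∑ τ ∈ Finset.Ico 1 t, lossInner (toMat d f) (p τ) (ℓ τ)) =
      ∏ u, B t u (f u) := fun f => by
    rw [exp_loss]
    exact Finset.prod_congr rfl fun u _ => (hB t ht u (f u)).symm
  have hq' := hq t ht
  simp only [hE] at hq'
  have hBpos : ∀ u v, 0 < B t u v := fun u v => by
    rw [hB t ht]; exact Real.exp_pos _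
  have hZ : 0 < ∑ g, priorPi d (toMat d g) * ∏ u, B t u (g u) :=
    Finset.sum_pos (fun g _ => mul_pos (priorPi_pos d hd g)
      (Finset.prod_pos fun u _ => hBpos _ _)) ⟨id, Finset.mem_univ _⟩
  have hK1 := kernelK_eq d (B t) (fun u v => if u = i ∧ v = j then 0 else 1)
  have hK2 := kernelK_eq d (B t) (fun _ _ => 1)
  simp only [mul_one] at hK2
  refine Eq.trans ?_ (congrArg₂ (fun x y : ℝ => 1 - x / y) hK1 hK2).symm
  change ∑ f, q t f * toMat d f i j = _
  simp only [hq']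
  rw [eq_sub_iff_add_eq, Finset.sum_div, ← Finset.sum_add_distrib]
  refine Eq.trans ?_ (div_self hZ.ne')
  conv_rhs => rw [Finset.sum_div]
  refine Finset.sum_congr rfl fun f _ => ?_
  by_cases hf : f i = j
  · have h0 : ∏ u, (B t u (f u) * if u = i ∧ f u = j then (0 : ℝ) else 1) = 0 :=
      Finset.prod_eq_zero (Finset.mem_univ i) (by simp [hf])
    rw [h0]
    simp [toMat, hf]
  · have h1 : ∏ u, (B t u (f u) * if u = i ∧ f u = j then (0 : ℝ) else 1) = ∏ u, B t u (f u) := by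
      refine Finset.prod_congr rfl fun u _ => ?_
      rw [if_neg, mul_one]
      rintro ⟨rfl, h⟩
      exact hf h
    rw [h1]
    simp [toMat, hf]
end

section
/- Prior-aware BM-reduction with MWU subroutines satisfies a prior-dependent Φ-regret bound: let d ≥ 1, η > 0, ψ ∈ S with all entries positive, and let p_1,…,p_T ∈ Δ(d) and ℓ_1,…,ℓ_T ∈ [0,1]^d be arbitrary. Define φ_t ∈ S row-wise by φ_{t,i,j} ∝_j ψ_{ij}·exp(−η Σ_{τ=1}^{t−1} p_{τ,i} ℓ_{τ,j}). Then for every binary row-stochastic φ ∈ Φ_b, Σ_{t=1}^T ⟨φ_t − φ, p_t ℓ_t^T⟩ ≤ log(1/π_ψ(φ))/η + η T. -/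
open Finset

theorem exp_neg_le_quad (x : ℝ) (hx : 0 ≤ x) : Real.exp (-x) ≤ 1 - x + x ^ 2 := by
  have h1 : x + 1 ≤ Real.exp x := Real.add_one_le_exp x
  have h2 : Real.exp (-x) * Real.exp x = 1 := by rw [← Real.exp_add]; simp
  have h3 : 0 < Real.exp (-x) := Real.exp_pos _
  have h4 : Real.exp (-x) * (x + 1) ≤ 1 := by
    exact (mul_le_mul_of_nonneg_left h1 h3.le).trans h2.le
  have h5 : 0 ≤ x ^ 3 := by positivity
  by_contra hcon
  push Not at hcon
  have h6 := mul_lt_mul_of_pos_right hcon (show 0 < x + 1 by linarith)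
  nlinarith

/-- One step of the potential argument. -/
theorem mwu_step_s13 {d : ℕ} (η : ℝ) (hη : 0 < η) (w c : Fin d → ℝ) (q : ℝ)
    (hw : ∀ j, 0 < w j) (hW : 0 < ∑ j, w j)
    (hc : ∀ j, 0 ≤ c j ∧ c j ≤ q) (hq : 0 ≤ q ∧ q ≤ 1) :
    ∑ j, w j * Real.exp (-η * c j) ≤
      (∑ j, w j) * Real.exp (-η * (∑ j, w j / (∑ j', w j') * c j) + η ^ 2 * q) := by
  set W := ∑ j, w j with hWdef
  have h1 : ∀ j, w j * Real.exp (-η * c j) ≤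
      w j * (1 + η ^ 2 * q) - η * (W * (w j / W * c j)) := by
    intro j
    have e : W * (w j / W * c j) = w j * c j := by field_simp
    rw [e]
    have h2 := exp_neg_le_quad (η * c j) (mul_nonneg hη.le (hc j).1)
    have h3 : (c j) ^ 2 ≤ q := by nlinarith [(hc j).1, (hc j).2, hq.1, hq.2]
    have h4 : η ^ 2 * (c j) ^ 2 ≤ η ^ 2 * q := mul_le_mul_of_nonneg_left h3 (sq_nonneg η)
    have h5 : Real.exp (-η * c j) ≤ 1 + η ^ 2 * q - η * c j := by
      rw [neg_mul]; nlinarith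
    have h6 := mul_le_mul_of_nonneg_left h5 (hw j).le
    linarith
  have h2 := Finset.sum_le_sum (fun j (_ : j ∈ Finset.univ) => h1 j)
  rw [Finset.sum_sub_distrib, ← Finset.sum_mul, ← Finset.mul_sum, ← Finset.mul_sum] at h2
  refine h2.trans ?_
  have h3 := Real.add_one_le_exp (-η * (∑ j, w j / W * c j) + η ^ 2 * q)
  have h4 := mul_le_mul_of_nonneg_left h3 hW.le
  linarith

/-- Potential bound for a single row. -/
theorem mwu_row {d : ℕ} (η : ℝ) (hη : 0 < η) (hd : 1 ≤ d) (ψ : Fin d → ℝ)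
    (hψ : ∀ j, 0 < ψ j) (hψ1 : ∑ j, ψ j = 1) (c : ℕ → Fin d → ℝ) (q : ℕ → ℝ) (T : ℕ)
    (hc : ∀ t ∈ Finset.Icc 1 T, ∀ j, 0 ≤ c t j ∧ c t j ≤ q t)
    (hq : ∀ t ∈ Finset.Icc 1 T, 0 ≤ q t ∧ q t ≤ 1)
    (Φ : ℕ → Fin d → ℝ)
    (hΦ : ∀ t ∈ Finset.Icc 1 T, ∀ j, Φ t j =
      ψ j * Real.exp (-η * ∑ τ ∈ Finset.Ico 1 t, c τ j) /
        ∑ j', ψ j' * Real.exp (-η * ∑ τ ∈ Finset.Ico 1 t, c τ j')) :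
    ∑ j, ψ j * Real.exp (-η * ∑ τ ∈ Finset.Icc 1 T, c τ j) ≤
      Real.exp (-η * (∑ t ∈ Finset.Icc 1 T, ∑ j, Φ t j * c t j) +
        η ^ 2 * ∑ t ∈ Finset.Icc 1 T, q t) := by
  induction T with
  | zero => simp [hψ1]
  | succ n ih =>
    have hsub : ∀ t ∈ Finset.Icc 1 n, t ∈ Finset.Icc 1 (n + 1) := by
      intro t ht; simp only [Finset.mem_Icc] at ht ⊢; omega
    have hmem : n + 1 ∈ Finset.Icc 1 (n + 1) := by simp
    have ih' := ih (fun t ht => hc t (hsub t ht)) (fun t ht => hq t (hsub t ht))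
      (fun t ht => hΦ t (hsub t ht))
    have hico : Finset.Ico 1 (n + 1) = Finset.Icc 1 n := by
      ext t; simp only [Finset.mem_Ico, Finset.mem_Icc]; omega
    have hΦn := hΦ (n + 1) hmem
    rw [hico] at hΦn
    have hpos : ∀ j, 0 < ψ j * Real.exp (-η * ∑ τ ∈ Finset.Icc 1 n, c τ j) :=
      fun j => mul_pos (hψ j) (Real.exp_pos _)
    have hW : 0 < ∑ j, ψ j * Real.exp (-η * ∑ τ ∈ Finset.Icc 1 n, c τ j) :=
      Finset.sum_pos (fun j _ => hpos j) ⟨⟨0, hd⟩, Finset.mem_univ _⟩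
    have hs := mwu_step_s13 η hη _ (c (n + 1)) (q (n + 1)) hpos hW (hc _ hmem) (hq _ hmem)
    simp only [← hΦn] at hs
    have hl : ∀ j, ψ j * Real.exp (-η * ∑ τ ∈ Finset.Icc 1 (n + 1), c τ j) =
        ψ j * Real.exp (-η * ∑ τ ∈ Finset.Icc 1 n, c τ j) * Real.exp (-η * c (n + 1) j) := by
      intro j
      rw [Finset.sum_Icc_succ_top (by omega), mul_add, Real.exp_add, mul_assoc]
    simp only [hl]
    refine hs.trans ((mul_le_mul_of_nonneg_right ih' (Real.exp_pos _).le).trans ?_)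
    rw [← Real.exp_add, Finset.sum_Icc_succ_top (by omega), Finset.sum_Icc_succ_top (by omega)]
    apply le_of_eq
    congr 1
    ring

/-- Prior-aware BM-reduction with MWU subroutines: with `φ_t ∈ S` defined
row-wise by `φ_{t,i,j} ∝_j ψ_{ij} exp(−η Σ_{τ<t} p_{τ,i} ℓ_{τ,j})`, for every `φ ∈ Φ_b`,
`Σ_t ⟨φ_t − φ, p_t ℓ_t^T⟩ ≤ log(1/π_ψ(φ))/η + η T`. -/
theorem stmt13 (d T : ℕ) (hd : 1 ≤ d) (η : ℝ) (hη : 0 < η)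
    (ψ : Matrix (Fin d) (Fin d) ℝ) (hψ : RowStochastic ψ) (hψpos : ∀ i j, 0 < ψ i j)
    (p ℓ : ℕ → Fin d → ℝ)
    (hp : ∀ t ∈ Finset.Icc 1 T, InSimplex d (p t))
    (hℓ : ∀ t ∈ Finset.Icc 1 T, ∀ i, 0 ≤ ℓ t i ∧ ℓ t i ≤ 1)
    (Φ : ℕ → Matrix (Fin d) (Fin d) ℝ)
    (hΦ : ∀ t ∈ Finset.Icc 1 T, ∀ i j,
      Φ t i j =
        ψ i j * Real.exp (-η * ∑ τ ∈ Finset.Ico 1 t, p τ i * ℓ τ j) /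
          ∑ j', ψ i j' * Real.exp (-η * ∑ τ ∈ Finset.Ico 1 t, p τ i * ℓ τ j')) :
    ∀ φ ∈ PhiB d,
      (∑ t ∈ Finset.Icc 1 T, ∑ i, ∑ j, (Φ t i j - φ i j) * (p t i * ℓ t j)) ≤
        Real.log (1 / piInd ψ φ) / η + η * T := by
  intro φ hφ
  obtain ⟨f, rfl⟩ : ∃ f, toMat d f = φ := by
    simpa [PhiB] using hφ
  have hpi : piInd ψ (toMat d f) = ∏ i, ψ i (f i) := by
    simp [piInd, toMat]
  have hlog : Real.log (1 / piInd ψ (toMat d f)) = ∑ i, -Real.log (ψ i (f i)) := by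
    rw [hpi, one_div, Real.log_inv, Real.log_prod (fun i _ => (hψpos i (f i)).ne'),
      Finset.sum_neg_distrib]
  have hp1 : ∀ t ∈ Finset.Icc 1 T, ∀ i, 0 ≤ p t i ∧ p t i ≤ 1 := by
    intro t ht i
    refine ⟨(hp t ht).1 i, ?_⟩
    rw [← (hp t ht).2]
    exact Finset.single_le_sum (fun k _ => (hp t ht).1 k) (Finset.mem_univ i)
  have hrow : ∀ i, η * (∑ t ∈ Finset.Icc 1 T, ∑ j, (Φ t i j - toMat d f i j) * (p t i * ℓ t j)) ≤
      -Real.log (ψ i (f i)) + η ^ 2 * ∑ t ∈ Finset.Icc 1 T, p t i := by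
    intro i
    have h := mwu_row η hη hd (ψ i) (hψpos i) (hψ i).2 (fun t j => p t i * ℓ t j)
      (fun t => p t i) T
      (fun t ht j => ⟨mul_nonneg (hp1 t ht i).1 (hℓ t ht j).1,
        mul_le_of_le_one_right (hp1 t ht i).1 (hℓ t ht j).2⟩)
      (fun t ht => hp1 t ht i) (fun t j => Φ t i j) (fun t ht j => hΦ t ht i j)
    have h2 := (Finset.single_le_sum (fun k _ => (mul_pos (hψpos i k) (Real.exp_pos
      (-η * ∑ τ ∈ Finset.Icc 1 T, p τ i * ℓ τ k))).le) (Finset.mem_univ (f i))).trans h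
    have h3 := Real.log_le_log (mul_pos (hψpos i (f i)) (Real.exp_pos _)) h2
    rw [Real.log_exp, Real.log_mul (hψpos i (f i)).ne' (Real.exp_pos _).ne', Real.log_exp] at h3
    have e : ∑ t ∈ Finset.Icc 1 T, ∑ j, (Φ t i j - toMat d f i j) * (p t i * ℓ t j) =
        (∑ t ∈ Finset.Icc 1 T, ∑ j, Φ t i j * (p t i * ℓ t j)) -
          ∑ t ∈ Finset.Icc 1 T, p t i * ℓ t (f i) := by
      rw [← Finset.sum_sub_distrib]
      refine Finset.sum_congr rfl fun t _ => ?_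
      simp [sub_mul, Finset.sum_sub_distrib, toMat]
    rw [e]
    linarith
  have hsum := Finset.sum_le_sum (fun i (_ : i ∈ Finset.univ) => hrow i)
  rw [← Finset.mul_sum, Finset.sum_add_distrib, ← hlog, ← Finset.mul_sum, Finset.sum_comm] at hsum
  have hT : ∑ i, ∑ t ∈ Finset.Icc 1 T, p t i = T := by
    rw [Finset.sum_comm, Finset.sum_congr rfl (fun t ht => (hp t ht).2)]
    simp
  rw [hT] at hsum
  have e2 : Real.log (1 / piInd ψ (toMat d f)) / η + η * T =
      (Real.log (1 / piInd ψ (toMat d f)) + η ^ 2 * T) / η := by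
    field_simp
  rw [e2, le_div_iff₀ hη, mul_comm]
  exact hsum
end
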